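/- arXiv:2509.09621 — 7 statements merged into one kernel-verified Lean document; each statement's English description precedes it below -/
import Mathlib

section
/- Let φ > 0 and let μ be a probability measure on ℝ² with finite second moment such that Var_μ(θ₁) > 0 or Var_μ(θ₂) > 0. Define v(a,b) = ∫ max(u(a,θ), u(b,θ)) dμ(θ), where u(a,θ) = −φ(a₁−θ₁)² − (a₂−θ₂)². Then there exist a, b ∈ ℝ² with v(a,b) > −φ·Var_μ(θ₁) − Var_μ(θ₂). Consequently any maximizer (a*,b*) of v has a* ≠ b*. -/
open MeasureTheory

/-!
For the payoff `-B (a - θ) (a - θ)`, moving a single action from `c` to `c + t` adds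
`2 ∫ B t (θ - c) - B t t` in expectation, whose linear term vanishes when `c` is the mean. Splitting
`c` into the pair `c ± t` replaces the linear term by `2 ∫ |B t (θ - c)|`. Unless the payoff at `c`
vanishes almost surely, this is positive in some direction `t`, and it dominates the quadratic cost
`B t t` once `t` is scaled down.
-/

theorem ae_eq_zero_of_forall_ae_apply_eq_zero {Ω 𝕜 E F : Type*} [MeasurableSpace Ω]
    {μ : Measure Ω} [Semiring 𝕜] [AddCommMonoid E] [Module 𝕜 E] [TopologicalSpace E]
    [TopologicalSpace.SeparableSpace E] [AddCommMonoid F] [Module 𝕜 F] [TopologicalSpace F]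
    [T2Space F] {L : Ω → E →L[𝕜] F} (h : ∀ t, ∀ᵐ ω ∂μ, L ω t = 0) :
    ∀ᵐ ω ∂μ, L ω = 0 := by
  obtain ⟨s, hs_countable, hs_dense⟩ := TopologicalSpace.exists_countable_dense E
  filter_upwards [(ae_ball_iff hs_countable).2 fun t _ ↦ h t] with ω hω
  exact DFunLike.coe_injective <|
    (L ω).continuous.ext_on hs_dense continuous_const hω

section QuadraticPayoff

variable {E : Type*} [NormedAddCommGroup E] [NormedSpace ℝ E] {B : E →L[ℝ] E →L[ℝ] ℝ}

/-- The common payoff `-B (a - θ) (a - θ)` from action `a` in state `θ`: a quadratic loss, with the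
bilinear form `B` weighing the directions of the error. -/
noncomputable def quadraticPayoff (B : E →L[ℝ] E →L[ℝ] ℝ) (a θ : E) : ℝ := -B (a - θ) (a - θ)

theorem quadraticPayoff_add (hB : B.toBilinForm.IsSymm) (c t θ : E) :
    quadraticPayoff B (c + t) θ = quadraticPayoff B c θ + 2 * B t (θ - c) - B t t := by
  have hsymm : B (θ - c) t = B t (θ - c) := hB.eq (θ - c) t
  have hshift : c + t - θ = t - (θ - c) := by abel
  rw [quadraticPayoff, quadraticPayoff, hshift, ← neg_sub θ c]
  simp only [map_sub, map_neg, sub_apply, neg_apply] at hsymm ⊢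
  linarith

theorem max_quadraticPayoff_add_sub (hB : B.toBilinForm.IsSymm) (c t θ : E) :
    max (quadraticPayoff B (c + t) θ) (quadraticPayoff B (c - t) θ) =
      quadraticPayoff B c θ + 2 * |B t (θ - c)| - B t t := by
  have hsub : quadraticPayoff B (c - t) θ =
      quadraticPayoff B c θ + -(2 * B t (θ - c)) - B t t := by
    simpa only [map_neg, neg_apply, neg_neg, mul_neg, ← sub_eq_add_neg] using
      quadraticPayoff_add hB c (-t) θ
  rw [quadraticPayoff_add hB, hsub, max_sub_sub_right, max_add_add_left, ← abs_eq_max_neg,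
    abs_mul, abs_two]

variable [MeasurableSpace E] {μ : Measure E}

/-- The expected payoff of a two-action scheme: the receiver takes the better of `a` and `b` in each
state. -/
noncomputable def twoActionPayoff (B : E →L[ℝ] E →L[ℝ] ℝ) (μ : Measure E) (a b : E) : ℝ :=
  ∫ θ, max (quadraticPayoff B a θ) (quadraticPayoff B b θ) ∂μ

/-- The babbling payoff: what the receiver expects from the uninformed action `∫ θ, θ ∂μ`, which is
optimal among constant actions by `integral_quadraticPayoff_le_babblingPayoff`. -/
noncomputable def babblingPayoff (B : E →L[ℝ] E →L[ℝ] ℝ) (μ : Measure E) : ℝ :=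
  ∫ θ, quadraticPayoff B (∫ x, x ∂μ) θ ∂μ

theorem integrable_quadraticPayoff [IsFiniteMeasure μ] (hμ : MemLp id 2 μ) (a : E) :
    Integrable (quadraticPayoff B a) μ := by
  have herror : MemLp (fun θ ↦ a - θ) 2 μ := (memLp_const a).sub hμ
  exact (memLp_one_iff_integrable.1 (B.memLp_of_bilin 1 herror herror)).neg

theorem integrable_apply_sub [IsFiniteMeasure μ] (hμ : Integrable id μ) (L : E →L[ℝ] ℝ) (c : E) :
    Integrable (fun θ ↦ L (θ - c)) μ :=
  L.integrable_comp (hμ.sub (integrable_const c))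

theorem integral_quadraticPayoff_add [IsProbabilityMeasure μ] (hB : B.toBilinForm.IsSymm)
    (hμ : MemLp id 2 μ) (c t : E) :
    ∫ θ, quadraticPayoff B (c + t) θ ∂μ =
      ∫ θ, quadraticPayoff B c θ ∂μ + 2 * ∫ θ, B t (θ - c) ∂μ - B t t := by
  have hpayoff := integrable_quadraticPayoff (B := B) hμ c
  have hlin := (integrable_apply_sub (hμ.integrable one_le_two) (B t) c).const_mul 2
  simp_rw [quadraticPayoff_add hB]
  rw [integral_sub (hpayoff.fun_add hlin) (integrable_const _), integral_add hpayoff hlin,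
    integral_const_mul, integral_const, probReal_univ, one_smul]

theorem twoActionPayoff_add_sub [IsProbabilityMeasure μ] (hB : B.toBilinForm.IsSymm)
    (hμ : MemLp id 2 μ) (c t : E) :
    twoActionPayoff B μ (c + t) (c - t) =
      ∫ θ, quadraticPayoff B c θ ∂μ + 2 * ∫ θ, |B t (θ - c)| ∂μ - B t t := by
  have hpayoff := integrable_quadraticPayoff (B := B) hμ c
  have habs := (integrable_apply_sub (hμ.integrable one_le_two) (B t) c).abs.const_mul 2
  simp_rw [twoActionPayoff, max_quadraticPayoff_add_sub hB]
  rw [integral_sub (hpayoff.fun_add habs) (integrable_const _), integral_add hpayoff habs,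
    integral_const_mul, integral_const, probReal_univ, one_smul]

theorem twoActionPayoff_self (a : E) :
    twoActionPayoff B μ a a = ∫ θ, quadraticPayoff B a θ ∂μ := by
  simp_rw [twoActionPayoff, max_self]

theorem integral_quadraticPayoff_le_babblingPayoff [CompleteSpace E] [IsProbabilityMeasure μ]
    (hB : B.toBilinForm.IsPosSemidef) (hμ : MemLp id 2 μ) (a : E) :
    ∫ θ, quadraticPayoff B a θ ∂μ ≤ babblingPayoff B μ := by
  set m := ∫ x, x ∂μ with hm
  have hint : Integrable (fun θ : E ↦ θ) μ := hμ.integrable one_le_two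
  have hint_sub : Integrable (fun θ ↦ θ - m) μ := hint.sub (integrable_const m)
  have hcentered : ∫ θ, (θ - m) ∂μ = 0 := by
    rw [integral_sub hint (integrable_const m), integral_const, probReal_univ, one_smul, ← hm,
      sub_self]
  have hlin : ∫ θ, B (a - m) (θ - m) ∂μ = 0 := by
    rw [(B (a - m)).integral_comp_comm hint_sub, hcentered, map_zero]
  calc ∫ θ, quadraticPayoff B a θ ∂μ
      = ∫ θ, quadraticPayoff B (m + (a - m)) θ ∂μ := by rw [add_sub_cancel]
    _ = babblingPayoff B μ - B (a - m) (a - m) := by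
        rw [integral_quadraticPayoff_add hB.isSymm hμ, hlin, mul_zero, add_zero, babblingPayoff]
    _ ≤ babblingPayoff B μ := sub_le_self _ (hB.nonneg (a - m))

theorem exists_integral_abs_apply_sub_pos [TopologicalSpace.SeparableSpace E] [IsFiniteMeasure μ]
    (hB : B.toBilinForm.IsSymm) (hμ : Integrable id μ) {c : E}
    (hc : ∫ θ, quadraticPayoff B c θ ∂μ ≠ 0) :
    ∃ t, 0 < ∫ θ, |B t (θ - c)| ∂μ := by
  contrapose! hc
  have happly (t : E) : ∀ᵐ θ ∂μ, B (θ - c) t = 0 := by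
    have hzero : ∫ θ, |B t (θ - c)| ∂μ = 0 :=
      (hc t).antisymm (integral_nonneg fun _ ↦ abs_nonneg _)
    filter_upwards [(integral_eq_zero_iff_of_nonneg (fun _ ↦ abs_nonneg _)
      (integrable_apply_sub hμ (B t) c).abs).1 hzero] with θ hθ
    exact (hB.eq (θ - c) t).trans (abs_eq_zero.1 hθ)
  refine integral_eq_zero_of_ae ?_
  filter_upwards [ae_eq_zero_of_forall_ae_apply_eq_zero happly] with θ hθ
  rw [quadraticPayoff, ← neg_sub θ c, map_neg B, hθ, neg_zero, zero_apply, neg_zero, Pi.zero_apply]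

theorem exists_integral_quadraticPayoff_lt_twoActionPayoff [TopologicalSpace.SeparableSpace E]
    [IsProbabilityMeasure μ] (hB : B.toBilinForm.IsSymm) (hμ : MemLp id 2 μ) {c : E}
    (hc : ∫ θ, quadraticPayoff B c θ ∂μ ≠ 0) :
    ∃ a b, ∫ θ, quadraticPayoff B c θ ∂μ < twoActionPayoff B μ a b := by
  obtain ⟨t, ht⟩ := exists_integral_abs_apply_sub_pos hB (hμ.integrable one_le_two) hc
  set D := ∫ θ, |B t (θ - c)| ∂μ
  obtain ⟨s, hs, hcost⟩ : ∃ s > 0, B t t * s < 2 * D :=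
    exists_pos_mul_lt (by positivity) (B t t)
  have hgain : 0 < s * (2 * D - B t t * s) := mul_pos hs (sub_pos.2 hcost)
  have habs : ∫ θ, |B (s • t) (θ - c)| ∂μ = s * D := by
    simp_rw [map_smul, smul_apply, smul_eq_mul, abs_mul, abs_of_pos hs, integral_const_mul]
    rfl
  refine ⟨c + s • t, c - s • t, ?_⟩
  rw [twoActionPayoff_add_sub hB hμ, habs]
  simp only [map_smul, smul_apply, smul_eq_mul]
  linarith

theorem stmt_4_general [CompleteSpace E] [TopologicalSpace.SeparableSpace E]
    [IsProbabilityMeasure μ] (hB : B.toBilinForm.IsPosSemidef) (hμ : MemLp id 2 μ)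
    (hneg : babblingPayoff B μ < 0) :
    (∃ a b, babblingPayoff B μ < twoActionPayoff B μ a b) ∧
    (∀ astar bstar, (∀ a b, twoActionPayoff B μ a b ≤ twoActionPayoff B μ astar bstar) →
      astar ≠ bstar) := by
  have hbeat := exists_integral_quadraticPayoff_lt_twoActionPayoff hB.isSymm hμ hneg.ne
  refine ⟨hbeat, ?_⟩
  rintro a _ hmax rfl
  obtain ⟨p, q, hpq⟩ := hbeat
  have hself := integral_quadraticPayoff_le_babblingPayoff hB hμ a
  rw [← twoActionPayoff_self] at hself
  exact (hpq.trans_le (hmax p q)).not_ge hself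

end QuadraticPayoff

section DiagonalForm

/-- The bilinear form `φ x₁ y₁ + x₂ y₂` on the plane, which makes `quadraticPayoff` the payoff
`-φ (a₁ - θ₁)² - (a₂ - θ₂)²`. -/
noncomputable def diagonalForm (φ : ℝ) : ℝ × ℝ →L[ℝ] ℝ × ℝ →L[ℝ] ℝ :=
  φ • (ContinuousLinearMap.fst ℝ ℝ ℝ).smulRight (ContinuousLinearMap.fst ℝ ℝ ℝ) +
    (ContinuousLinearMap.snd ℝ ℝ ℝ).smulRight (ContinuousLinearMap.snd ℝ ℝ ℝ)

theorem diagonalForm_apply (φ : ℝ) (x y : ℝ × ℝ) :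
    diagonalForm φ x y = φ * (x.1 * y.1) + x.2 * y.2 := rfl

theorem isPosSemidef_diagonalForm {φ : ℝ} (hφ : 0 ≤ φ) :
    (diagonalForm φ).toBilinForm.IsPosSemidef where
  eq x y := by
    simp only [ContinuousLinearMap.toBilinForm_apply, diagonalForm_apply]
    ring
  nonneg x := add_nonneg (mul_nonneg hφ (mul_self_nonneg x.1)) (mul_self_nonneg x.2)

theorem quadraticPayoff_diagonalForm (φ : ℝ) (a θ : ℝ × ℝ) :
    quadraticPayoff (diagonalForm φ) a θ = -(φ * (a.1 - θ.1) ^ 2) - (a.2 - θ.2) ^ 2 := by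
  rw [quadraticPayoff, diagonalForm_apply, Prod.fst_sub, Prod.snd_sub]
  ring

theorem babblingPayoff_diagonalForm (φ : ℝ) {μ : Measure (ℝ × ℝ)} [IsFiniteMeasure μ]
    (hμ : MemLp id 2 μ) :
    babblingPayoff (diagonalForm φ) μ =
      -(φ * ∫ θ, (θ.1 - (∫ x, x ∂μ).1) ^ 2 ∂μ) - ∫ θ, (θ.2 - (∫ x, x ∂μ).2) ^ 2 ∂μ := by
  set m := ∫ x, x ∂μ with hm
  have hsq₁ : Integrable (fun θ : ℝ × ℝ ↦ (θ.1 - m.1) ^ 2) μ :=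
    (hμ.fst.sub (memLp_const m.1)).integrable_sq
  have hsq₂ : Integrable (fun θ : ℝ × ℝ ↦ (θ.2 - m.2) ^ 2) μ :=
    (hμ.snd.sub (memLp_const m.2)).integrable_sq
  simp_rw [babblingPayoff, ← hm, quadraticPayoff_diagonalForm, sub_sq_comm m.1, sub_sq_comm m.2]
  rw [integral_sub (hsq₁.const_mul φ).fun_neg hsq₂, integral_neg, integral_const_mul]

theorem babblingPayoff_diagonalForm_neg {φ : ℝ} (hφ : 0 < φ) {μ : Measure (ℝ × ℝ)}
    [IsFiniteMeasure μ] (hμ : MemLp id 2 μ)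
    (hvar : 0 < ∫ θ, (θ.1 - (∫ x, x ∂μ).1) ^ 2 ∂μ ∨ 0 < ∫ θ, (θ.2 - (∫ x, x ∂μ).2) ^ 2 ∂μ) :
    babblingPayoff (diagonalForm φ) μ < 0 := by
  have hvar₁ : 0 ≤ ∫ θ, (θ.1 - (∫ x, x ∂μ).1) ^ 2 ∂μ := integral_nonneg fun _ ↦ sq_nonneg _
  have hvar₂ : 0 ≤ ∫ θ, (θ.2 - (∫ x, x ∂μ).2) ^ 2 ∂μ := integral_nonneg fun _ ↦ sq_nonneg _
  rw [babblingPayoff_diagonalForm φ hμ]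
  rcases hvar with hpos₁ | hpos₂
  · linarith [mul_pos hφ hpos₁]
  · linarith [mul_nonneg hφ.le hvar₁]

end DiagonalForm

/-- if the state has positive variance in some dimension, some two-action
scheme strictly beats the babbling payoff `−φ·Var(θ₁) − Var(θ₂)`; consequently any
maximizer `(a*, b*)` of `v` has `a* ≠ b*`. -/
theorem stmt_4 (φ : ℝ) (hφ : 0 < φ)
    (μ : Measure (ℝ × ℝ)) [IsProbabilityMeasure μ]
    (hmom : Integrable (fun θ : ℝ × ℝ => ‖θ‖ ^ 2) μ)
    (u : (ℝ × ℝ) → (ℝ × ℝ) → ℝ)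
    (hu : ∀ a θ : ℝ × ℝ, u a θ = -(φ * (a.1 - θ.1) ^ 2) - (a.2 - θ.2) ^ 2)
    (v : (ℝ × ℝ) → (ℝ × ℝ) → ℝ)
    (hv : ∀ a b : ℝ × ℝ, v a b = ∫ θ, max (u a θ) (u b θ) ∂μ)
    (m : ℝ × ℝ) (hm : m = ∫ θ, θ ∂μ)
    (V₁ V₂ : ℝ)
    (hV₁ : V₁ = ∫ θ, (θ.1 - m.1) ^ 2 ∂μ)
    (hV₂ : V₂ = ∫ θ, (θ.2 - m.2) ^ 2 ∂μ)
    (hvar : 0 < V₁ ∨ 0 < V₂) :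
    (∃ a b : ℝ × ℝ, -(φ * V₁) - V₂ < v a b) ∧
    (∀ astar bstar : ℝ × ℝ,
      (∀ a b : ℝ × ℝ, v a b ≤ v astar bstar) → astar ≠ bstar) := by
  have hμ : MemLp id 2 μ := (memLp_two_iff_integrable_sq_norm aestronglyMeasurable_id).2 hmom
  obtain rfl : u = quadraticPayoff (diagonalForm φ) :=
    funext₂ fun a θ ↦ (hu a θ).trans (quadraticPayoff_diagonalForm φ a θ).symm
  obtain rfl : v = twoActionPayoff (diagonalForm φ) μ := funext₂ hv
  subst hm hV₁ hV₂
  rw [← babblingPayoff_diagonalForm φ hμ]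
  exact stmt_4_general (isPosSemidef_diagonalForm hφ.le) hμ
    (babblingPayoff_diagonalForm_neg hφ hμ hvar)
end

section
/- Let φ > 0 and let μ be a probability measure on ℝ², absolutely continuous with respect to Lebesgue measure, with finite second moment. Define u(a,θ) = −φ(a₁−θ₁)² − (a₂−θ₂)² and v(a,b) = ∫ max(u(a,θ), u(b,θ)) dμ(θ). Suppose (a*,b*) maximizes v over ℝ² × ℝ² and a* ≠ b*. Let A = {θ ∈ ℝ² : u(a*,θ) > u(b*,θ)} and B = {θ ∈ ℝ² : u(b*,θ) > u(a*,θ)}. If μ(A) > 0 then a* = (1/μ(A)) ∫_A θ dμ(θ), and if μ(B) > 0 then b* = (1/μ(B)) ∫_B θ dμ(θ). That is, each optimal action equals the conditional mean of the state on the region of states for which it is sent, so the optimal two-message scheme is an equilibrium. -/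
/-!
Fix the action `b` and replace `a` by another action `c`. On the region `A` where `a` beats `b`, the
new scheme earns at least the payoff of `c`, and off `A` at least that of `b`, as before; so if
`(a, b)` is optimal, then `a` is already the best constant action on `A`. For a payoff
`-Q (a - θ) (a - θ)` with `Q` positive definite, the parallel axis identity shows that the only best
constant action is the mean.
-/

open MeasureTheory

section MaxOfPayoffs

variable {Ω : Type*}

theorem indicator_sub_le_max_sub_max (f g h : Ω → ℝ) (ω : Ω) :
    {ω | g ω < f ω}.indicator (h - f) ω ≤ max (h ω) (g ω) - max (f ω) (g ω) := by
  by_cases hω : g ω < f ω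
  · simp [Set.indicator, hω, hω.le]
  · simp [Set.indicator, hω, not_lt.1 hω]

variable [MeasurableSpace Ω] {μ : Measure Ω} {f g h : Ω → ℝ}

theorem setIntegral_le_of_integral_max_le (hf : Integrable f μ) (hg : Integrable g μ)
    (hh : Integrable h μ)
    (hmax : ∫ ω, max (h ω) (g ω) ∂μ ≤ ∫ ω, max (f ω) (g ω) ∂μ) :
    ∫ ω in {ω | g ω < f ω}, h ω ∂μ ≤ ∫ ω in {ω | g ω < f ω}, f ω ∂μ := by
  have hA : NullMeasurableSet {ω | g ω < f ω} μ :=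
    nullMeasurableSet_lt hg.aemeasurable hf.aemeasurable
  rw [← sub_nonpos]
  calc ∫ ω in {ω | g ω < f ω}, h ω ∂μ - ∫ ω in {ω | g ω < f ω}, f ω ∂μ
      = ∫ ω, {ω | g ω < f ω}.indicator (h - f) ω ∂μ := by
        rw [integral_indicator₀ hA, ← integral_sub hh.integrableOn hf.integrableOn]; rfl
    _ ≤ ∫ ω, (max (h ω) (g ω) - max (f ω) (g ω)) ∂μ :=
        integral_mono ((hh.sub hf).indicator₀ hA) ((hh.sup hg).sub (hf.sup hg))
          (indicator_sub_le_max_sub_max f g h)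
    _ = ∫ ω, max (h ω) (g ω) ∂μ - ∫ ω, max (f ω) (g ω) ∂μ :=
        integral_sub (hh.sup hg) (hf.sup hg)
    _ ≤ 0 := sub_nonpos.2 hmax

end MaxOfPayoffs

section QuadraticLoss

variable {Ω E : Type*} [MeasurableSpace Ω] {μ : Measure Ω} [IsFiniteMeasure μ]
  [NormedAddCommGroup E] [NormedSpace ℝ E] (Q : E →L[ℝ] E →L[ℝ] ℝ) {X : Ω → E}

theorem integrable_bilin_const_sub (hX : MemLp X 2 μ) (c : E) :
    Integrable (fun ω => Q (c - X ω) (c - X ω)) μ :=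
  have hcX : MemLp (fun ω => c - X ω) 2 μ := (memLp_const c).sub hX
  memLp_one_iff_integrable.1 (Q.memLp_of_bilin 1 hcX hcX)

variable [CompleteSpace E]

theorem integral_bilin_const_sub_eq_add_average (hX : MemLp X 2 μ) (c : E) :
    ∫ ω, Q (c - X ω) (c - X ω) ∂μ =
      μ.real Set.univ * Q (c - ⨍ ω', X ω' ∂μ) (c - ⨍ ω', X ω' ∂μ) +
        ∫ ω, Q ((⨍ ω', X ω' ∂μ) - X ω) ((⨍ ω', X ω' ∂μ) - X ω) ∂μ := by
  set m := ⨍ ω', X ω' ∂μ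
  have hX₁ : Integrable X μ := hX.integrable one_le_two
  have hmX : Integrable (fun ω => m - X ω) μ := (integrable_const m).sub hX₁
  have integral_cross (L : E →L[ℝ] ℝ) : ∫ ω, L (m - X ω) ∂μ = 0 := by
    rw [L.integral_comp_comm hmX, integral_average_sub hX₁, map_zero]
  have expand (ω : Ω) : Q (c - X ω) (c - X ω) =
      Q (c - m) (c - m) + (Q (c - m) + Q.flip (c - m)) (m - X ω) + Q (m - X ω) (m - X ω) := by
    rw [← sub_add_sub_cancel c m (X ω)]
    simp only [map_add, add_apply, ContinuousLinearMap.flip_apply]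
    ring
  have hcross := (Q (c - m) + Q.flip (c - m)).integrable_comp hmX
  have hconst_add_cross : Integrable
      (fun ω => Q (c - m) (c - m) + (Q (c - m) + Q.flip (c - m)) (m - X ω)) μ :=
    (integrable_const _).add hcross
  simp only [expand]
  rw [integral_add hconst_add_cross (integrable_bilin_const_sub Q hX m),
    integral_add (integrable_const _) hcross, integral_cross, integral_const, smul_eq_mul, add_zero]

variable {Q}

theorem eq_average_of_integral_bilin_const_sub_le [NeZero μ] (hQ : ∀ x, x ≠ 0 → 0 < Q x x)
    (hX : MemLp X 2 μ) {a : E}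
    (ha : ∫ ω, Q (a - X ω) (a - X ω) ∂μ ≤
      ∫ ω, Q ((⨍ ω', X ω' ∂μ) - X ω) ((⨍ ω', X ω' ∂μ) - X ω) ∂μ) :
    a = ⨍ ω, X ω ∂μ := by
  rw [integral_bilin_const_sub_eq_add_average Q hX a] at ha
  by_contra hne
  have := mul_pos (measureReal_univ_pos (μ := μ)) (hQ _ (sub_ne_zero.2 hne))
  linarith

theorem eq_setAverage_of_forall_integral_max_le (hQ : ∀ x, x ≠ 0 → 0 < Q x x)
    (hX : MemLp X 2 μ) {g : Ω → ℝ} (hg : Integrable g μ) {a : E}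
    (ha : ∀ c, ∫ ω, max (-Q (c - X ω) (c - X ω)) (g ω) ∂μ ≤
      ∫ ω, max (-Q (a - X ω) (a - X ω)) (g ω) ∂μ)
    (hpos : 0 < μ {ω | g ω < -Q (a - X ω) (a - X ω)}) :
    a = ⨍ ω in {ω | g ω < -Q (a - X ω) (a - X ω)}, X ω ∂μ := by
  set A := {ω | g ω < -Q (a - X ω) (a - X ω)}
  have : NeZero (μ.restrict A) := ⟨Measure.restrict_eq_zero.not.2 hpos.ne'⟩
  have hint (c : E) := (integrable_bilin_const_sub Q hX c).neg
  refine eq_average_of_integral_bilin_const_sub_le hQ (hX.restrict A) ?_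
  have hle := setIntegral_le_of_integral_max_le (hint a) hg (hint _) (ha (⨍ ω in A, X ω ∂μ))
  simpa only [Pi.neg_apply, integral_neg, neg_le_neg_iff] using hle

theorem stmt_5_general (hQ : ∀ x, x ≠ 0 → 0 < Q x x) (hX : MemLp X 2 μ) {u : E → Ω → ℝ}
    (hu : ∀ a ω, u a ω = -Q (a - X ω) (a - X ω)) {a b : E}
    (ha : ∀ c, ∫ ω, max (u c ω) (u b ω) ∂μ ≤ ∫ ω, max (u a ω) (u b ω) ∂μ)
    (hb : ∀ c, ∫ ω, max (u a ω) (u c ω) ∂μ ≤ ∫ ω, max (u a ω) (u b ω) ∂μ) :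
    (0 < μ {ω | u b ω < u a ω} → a = ⨍ ω in {ω | u b ω < u a ω}, X ω ∂μ) ∧
    (0 < μ {ω | u a ω < u b ω} → b = ⨍ ω in {ω | u a ω < u b ω}, X ω ∂μ) := by
  have hint (c : E) := (integrable_bilin_const_sub Q hX c).neg
  simp only [hu] at ha hb ⊢
  refine ⟨eq_setAverage_of_forall_integral_max_le hQ hX (hint b) ha,
    eq_setAverage_of_forall_integral_max_le hQ hX (hint a) fun c => ?_⟩
  simpa only [max_comm, Pi.neg_apply] using hb c

end QuadraticLoss

section WeightedForm

/-- The bilinear form `φ x₁ y₁ + x₂ y₂` on the plane, bundled as a continuous bilinear map; the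
payoff of action `a` in state `θ` is `-weightedForm φ (a - θ) (a - θ)`. -/
noncomputable def weightedForm (φ : ℝ) : ℝ × ℝ →L[ℝ] ℝ × ℝ →L[ℝ] ℝ :=
  φ • (ContinuousLinearMap.mul ℝ ℝ).bilinearComp (.fst ℝ ℝ ℝ) (.fst ℝ ℝ ℝ) +
    (ContinuousLinearMap.mul ℝ ℝ).bilinearComp (.snd ℝ ℝ ℝ) (.snd ℝ ℝ ℝ)

theorem weightedForm_self (φ : ℝ) (x : ℝ × ℝ) :
    weightedForm φ x x = φ * x.1 ^ 2 + x.2 ^ 2 := by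
  simp [weightedForm, sq]

theorem weightedForm_self_pos {φ : ℝ} (hφ : 0 < φ) (x : ℝ × ℝ) (hx : x ≠ 0) :
    0 < weightedForm φ x x := by
  rw [weightedForm_self]
  have hx' : x.1 ≠ 0 ∨ x.2 ≠ 0 := by
    contrapose! hx
    exact Prod.ext hx.1 hx.2
  rcases hx' with h₁ | h₂ <;> positivity

end WeightedForm

/-- at an optimal two-action scheme `(a*, b*)` with `a* ≠ b*` (for an
absolutely continuous prior), each optimal action equals the conditional mean of the state
on the region of states where it is strictly preferred. -/
theorem stmt_5 (φ : ℝ) (hφ : 0 < φ)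
    (μ : Measure (ℝ × ℝ)) [IsProbabilityMeasure μ]
    (hac : μ ≪ (volume : Measure (ℝ × ℝ)))
    (hmom : Integrable (fun θ : ℝ × ℝ => ‖θ‖ ^ 2) μ)
    (u : (ℝ × ℝ) → (ℝ × ℝ) → ℝ)
    (hu : ∀ a θ : ℝ × ℝ, u a θ = -(φ * (a.1 - θ.1) ^ 2) - (a.2 - θ.2) ^ 2)
    (v : (ℝ × ℝ) → (ℝ × ℝ) → ℝ)
    (hv : ∀ a b : ℝ × ℝ, v a b = ∫ θ, max (u a θ) (u b θ) ∂μ)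
    (astar bstar : ℝ × ℝ)
    (hmax : ∀ a b : ℝ × ℝ, v a b ≤ v astar bstar)
    (hne : astar ≠ bstar)
    (A B : Set (ℝ × ℝ))
    (hA : A = {θ : ℝ × ℝ | u bstar θ < u astar θ})
    (hB : B = {θ : ℝ × ℝ | u astar θ < u bstar θ}) :
    (0 < μ A → astar = (μ A).toReal⁻¹ • ∫ θ in A, θ ∂μ) ∧
    (0 < μ B → bstar = (μ B).toReal⁻¹ • ∫ θ in B, θ ∂μ) := by
  subst hA hB
  have hθ : MemLp (fun θ : ℝ × ℝ => θ) 2 μ :=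
    (memLp_two_iff_integrable_sq_norm measurable_id.aestronglyMeasurable).2 hmom
  have hu' (a θ : ℝ × ℝ) : u a θ = -weightedForm φ (a - θ) (a - θ) := by
    rw [hu, weightedForm_self, neg_add', Prod.fst_sub, Prod.snd_sub]
  simp only [hv] at hmax
  simpa only [setAverage_eq, measureReal_def] using stmt_5_general (weightedForm_self_pos hφ) hθ hu'
    (fun c => hmax c bstar) (hmax astar)
end

section
/- Say a function s : ℝ² → ℝ satisfies the Intermediate Value Property (IVP) if for all θ, θ' ∈ ℝ² with s(θ') < s(θ) and every m in the interval [s(θ'), s(θ)] that lies in the range of s, there exists θ̃ ∈ ℝ² with s(θ̃) = m and min(θᵢ, θ'ᵢ) ≤ θ̃ᵢ ≤ max(θᵢ, θ'ᵢ) for i = 1, 2. Then no function s : ℝ² → ℝ satisfying the IVP is a bijection. -/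
/-!
Injectivity turns the intermediate value property into betweenness: a point whose value lies
between those of `p` and `q` lies itself in the box `[[q, p]]`. So if `s` increases along one edge
of a rectangle, it must also increase along the next edge, since otherwise one of the two outer
corners would lie on the edge joining the other two. Going once around the rectangle is absurd.
-/

open Set Function

/-- The intermediate value property of a score `s`: every value of `s` between `s p` and `s q` is
attained in the box spanned by `p` and `q`. On `ℝ × ℝ`, ordered coordinatewise, the lattice interval
`[[q, p]] = Icc (q ⊓ p) (q ⊔ p)` is the box of points lying coordinatewise between `q` and `p`. -/
def HasIVP {L γ : Type*} [Lattice L] [Preorder γ] (s : L → γ) : Prop :=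
  ∀ ⦃p q : L⦄, s p < s q → Icc (s p) (s q) ∩ range s ⊆ s '' uIcc q p

namespace HasIVP

theorem mem_uIcc_of_injective {L γ : Type*} [Lattice L] [Preorder γ] {s : L → γ} (hs : HasIVP s)
    (hinj : Injective s) {p q r : L} (hpq : s p < s q) (hr : s r ∈ Icc (s p) (s q)) :
    r ∈ uIcc q p :=
  hinj.mem_set_image.mp (hs hpq ⟨hr, mem_range_self r⟩)

theorem lt_of_notMem_uIcc {L γ : Type*} [Lattice L] [LinearOrder γ] {s : L → γ} (hs : HasIVP s)
    (hinj : Injective s) {p q r : L} (hr : r ∉ uIcc q p) (hp : p ∉ uIcc q r) (hpq : s p < s q) :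
    s q < s r := by
  by_contra! hrq
  rcases le_or_gt (s p) (s r) with hpr | hrp
  · exact hr (hs.mem_uIcc_of_injective hinj hpq ⟨hpr, hrq⟩)
  · exact hp (hs.mem_uIcc_of_injective hinj (hrp.trans hpq) ⟨hrp.le, hpq.le⟩)

section Prod

variable {α β γ : Type*} [Lattice α] [Lattice β] [LinearOrder γ] {s : α × β → γ}
  {a a' : α} {b b' : β}

theorem lt_vertical_of_lt_horizontal (hs : HasIVP s) (hinj : Injective s) (ha : a ≠ a')
    (hb : b ≠ b') (h : s (a', b) < s (a, b)) : s (a, b) < s (a, b') :=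
  hs.lt_of_notMem_uIcc hinj (by simp [uIcc_prod_eq, hb.symm]) (by simp [uIcc_prod_eq, ha.symm]) h

theorem lt_horizontal_of_lt_vertical (hs : HasIVP s) (hinj : Injective s) (ha : a ≠ a')
    (hb : b ≠ b') (h : s (a, b') < s (a, b)) : s (a, b) < s (a', b) :=
  hs.lt_of_notMem_uIcc hinj (by simp [uIcc_prod_eq, ha.symm]) (by simp [uIcc_prod_eq, hb.symm]) h

theorem not_lt_horizontal [Nontrivial β] (hs : HasIVP s) (hinj : Injective s) (ha : a ≠ a')
    (b : β) : ¬ s (a', b) < s (a, b) := by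
  intro bottom
  obtain ⟨b', hb⟩ := exists_ne b
  have right : s (a, b) < s (a, b') := hs.lt_vertical_of_lt_horizontal hinj ha hb.symm bottom
  have top : s (a, b') < s (a', b') := hs.lt_horizontal_of_lt_vertical hinj ha hb right
  have left : s (a', b') < s (a', b) := hs.lt_vertical_of_lt_horizontal hinj ha.symm hb top
  exact lt_irrefl _ (bottom.trans (right.trans (top.trans left)))

end Prod

end HasIVP

theorem stmt_6_general {α β γ : Type*} [Lattice α] [Lattice β] [LinearOrder γ] [Nontrivial α]
    [Nontrivial β] {s : α × β → γ} (hs : HasIVP s) : ¬ Injective s := by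
  intro hinj
  obtain ⟨a, a', ha⟩ := exists_pair_ne α
  obtain ⟨b⟩ : Nonempty β := inferInstance
  have heq : s (a, b) = s (a', b) :=
    le_antisymm (not_lt.mp (hs.not_lt_horizontal hinj ha b))
      (not_lt.mp (hs.not_lt_horizontal hinj ha.symm b))
  exact ha (congrArg Prod.fst (hinj heq))

/-- no function `s : ℝ² → ℝ` satisfying the Intermediate Value Property is a
bijection. -/
theorem stmt_6 (s : ℝ × ℝ → ℝ)
    (hIVP : ∀ θ θ' : ℝ × ℝ, s θ' < s θ →
      ∀ m : ℝ, s θ' ≤ m → m ≤ s θ → m ∈ Set.range s →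
        ∃ θt : ℝ × ℝ, s θt = m ∧
          min θ.1 θ'.1 ≤ θt.1 ∧ θt.1 ≤ max θ.1 θ'.1 ∧
          min θ.2 θ'.2 ≤ θt.2 ∧ θt.2 ≤ max θ.2 θ'.2) :
    ¬ Function.Bijective s := by
  refine fun hbij ↦ stmt_6_general (fun p q hpq m ⟨hm, hrange⟩ ↦ ?_) hbij.injective
  obtain ⟨t, ht, hl₁, hu₁, hl₂, hu₂⟩ := hIVP q p hpq m hm.1 hm.2 hrange
  exact ⟨t, ⟨⟨hl₁, hl₂⟩, ⟨hu₁, hu₂⟩⟩, ht⟩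
end

section
/- For all positive real numbers a, b, c, d: 2·min( ac/(a+c), bd/(b+d) ) ≤ ab/(a+b) + cd/(c+d). -/
/-!
In terms of reciprocals, `xy / (x + y) = (x⁻¹ + y⁻¹)⁻¹`. Both the two diagonals and the two sides
split the four reciprocals into two pairs, so the reciprocals of the diagonal terms and those of
the side terms have the same total. As inversion is convex, the average of the side terms is at
least the inverse of half this total; as inversion is antitone, the smaller diagonal term is at
most that value.
-/

section ConvexAntitone

variable {𝕜 E β : Type*} [Field 𝕜] [LinearOrder 𝕜] [IsStrictOrderedRing 𝕜]
  [AddCommGroup E] [Module 𝕜 E] [AddCommGroup β] [Module 𝕜 β] {s : Set E} {f : E → β} {x y u v : E}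

theorem two_nsmul_map_midpoint_le_add_of_convexOn [PartialOrder β] [IsOrderedAddMonoid β]
    (hf : ConvexOn 𝕜 s f) (hx : x ∈ s) (hy : y ∈ s) :
    2 • f (midpoint 𝕜 x y) ≤ f x + f y := by
  have f_midpoint_le : f (midpoint 𝕜 x y) ≤ midpoint 𝕜 (f x) (f y) := by
    have half_nonneg : (0 : 𝕜) ≤ ⅟2 := by simp
    simpa only [midpoint_eq_smul_add, smul_add] using
      hf.2 hx hy half_nonneg half_nonneg invOf_two_add_invOf_two
  calc
    2 • f (midpoint 𝕜 x y) ≤ 2 • midpoint 𝕜 (f x) (f y) := nsmul_le_nsmul_right f_midpoint_le 2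
    _ = f x + f y := by rw [two_nsmul, midpoint_add_self]

theorem two_nsmul_min_le_add_of_convexOn_of_antitoneOn [LinearOrder E] [IsOrderedAddMonoid E]
    [LinearOrder β] [IsOrderedAddMonoid β] (hf : ConvexOn 𝕜 s f) (hf_anti : AntitoneOn f s)
    (hx : x ∈ s) (hy : y ∈ s) (hu : u ∈ s) (hv : v ∈ s) (hxyuv : x + y ≤ u + v) :
    2 • min (f u) (f v) ≤ f x + f y := by
  have midpoint_mem : midpoint 𝕜 x y ∈ s := hf.1.midpoint_mem hx hy
  have midpoint_le_max : midpoint 𝕜 x y ≤ max u v :=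
    le_max_of_two_nsmul_le_add <| by rwa [two_nsmul, midpoint_add_self]
  have min_le_f_midpoint : min (f u) (f v) ≤ f (midpoint 𝕜 x y) := by
    rcases le_max_iff.mp midpoint_le_max with h | h
    · exact min_le_of_left_le (hf_anti midpoint_mem hu h)
    · exact min_le_of_right_le (hf_anti midpoint_mem hv h)
  exact (nsmul_le_nsmul_right min_le_f_midpoint 2).trans
    (two_nsmul_map_midpoint_le_add_of_convexOn hf hx hy)

end ConvexAntitone

section LinearOrderedField

variable {K : Type*} [Field K]

theorem mul_div_add_eq_inv_inv_add_inv {x y : K} (hx : x ≠ 0) (hy : y ≠ 0) :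
    x * y / (x + y) = (x⁻¹ + y⁻¹)⁻¹ := by
  rw [inv_add_inv hx hy, inv_div]

variable [LinearOrder K] [IsStrictOrderedRing K]

theorem convexOn_inv_Ioi : ConvexOn K (Set.Ioi 0) fun x : K ↦ x⁻¹ := by
  simpa only [zpow_neg_one] using convexOn_zpow (𝕜 := K) (-1)

theorem two_mul_min_inv_le_inv_add_inv {x y u v : K} (hx : 0 < x) (hy : 0 < y) (hu : 0 < u)
    (hv : 0 < v) (hxyuv : x + y ≤ u + v) : 2 * min u⁻¹ v⁻¹ ≤ x⁻¹ + y⁻¹ := by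
  simpa only [nsmul_eq_mul, Nat.cast_ofNat] using
    two_nsmul_min_le_add_of_convexOn_of_antitoneOn convexOn_inv_Ioi inv_antitoneOn_Ioi
      hx hy hu hv hxyuv

theorem stmt_9_general {a b c d : K} (ha : 0 < a) (hb : 0 < b) (hc : 0 < c) (hd : 0 < d) :
    2 * min (a * c / (a + c)) (b * d / (b + d)) ≤ a * b / (a + b) + c * d / (c + d) := by
  have sides_eq_diagonals : (a⁻¹ + b⁻¹) + (c⁻¹ + d⁻¹) = (a⁻¹ + c⁻¹) + (b⁻¹ + d⁻¹) :=
    add_add_add_comm _ _ _ _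
  rw [mul_div_add_eq_inv_inv_add_inv ha.ne' hc.ne', mul_div_add_eq_inv_inv_add_inv hb.ne' hd.ne',
    mul_div_add_eq_inv_inv_add_inv ha.ne' hb.ne', mul_div_add_eq_inv_inv_add_inv hc.ne' hd.ne']
  exact two_mul_min_inv_le_inv_add_inv (by positivity) (by positivity) (by positivity)
    (by positivity) sides_eq_diagonals.le

end LinearOrderedField

/-- Remark 1: pooling along the better diagonal is weakly better than
pooling the two side pairs: `2·min(ac/(a+c), bd/(b+d)) ≤ ab/(a+b) + cd/(c+d)`. -/
theorem stmt_9 (a b c d : ℝ) (ha : 0 < a) (hb : 0 < b) (hc : 0 < c) (hd : 0 < d) :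
    2 * min (a * c / (a + c)) (b * d / (b + d)) ≤ a * b / (a + b) + c * d / (c + d) :=
  stmt_9_general ha hb hc hd
end

section
/- Let a, b, c, d be positive real numbers with d ≥ a, d ≥ b, d ≥ c, and b < c. Then ab/(a+b) + cd/(c+d) > 2·min( ac/(a+c), bd/(b+d) ). -/
/-!
Write `g x y = x * y / (x + y)`, and view side pooling as `g a b + g d c` and the diagonals as
`g a c` and `g d b`. Up to exchanging `(a, b)` with `(d, c)`, assume `b < c`. If `a < d`, strict
supermodularity says that side pooling exceeds the sum of the two diagonals. If `d ≤ a`,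
monotonicity alone shows that both of its terms are at least `g d b`, the second one strictly.
Supermodularity comes from `g x' y - g x y = (x' - x) * (y / (x + y)) * (y / (x' + y))`, in which
both fractions increase with `y`.
-/

open Set

/-- Strict supermodularity (increasing differences) on the rectangle `s ×ˢ t`, phrased without
subtraction: the two comparable corners of a nondegenerate rectangle outweigh the other two. -/
def StrictSupermodularOn {α β M : Type*} [LT α] [LT β] [Add M] [LT M]
    (g : α → β → M) (s : Set α) (t : Set β) : Prop :=
  ∀ ⦃x⦄, x ∈ s → ∀ ⦃x'⦄, x' ∈ s → ∀ ⦃y⦄, y ∈ t → ∀ ⦃y'⦄, y' ∈ t →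
    x < x' → y < y' → g x y' + g x' y < g x y + g x' y'

theorem StrictSupermodularOn.two_nsmul_min_lt {α β M : Type*} [LinearOrder α] [LinearOrder β]
    [AddCommMonoid M] [LinearOrder M] [IsOrderedCancelAddMonoid M]
    {g : α → β → M} {s : Set α} {t : Set β} (hg : StrictSupermodularOn g s t)
    (hleft : ∀ y ∈ t, MonotoneOn (fun x ↦ g x y) s) (hright : ∀ x ∈ s, StrictMonoOn (g x) t)
    {a d : α} {b c : β} (ha : a ∈ s) (hd : d ∈ s) (hb : b ∈ t) (hc : c ∈ t) (hbc : b ≠ c) :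
    2 • min (g a c) (g d b) < g a b + g d c := by
  wlog hlt : b < c generalizing a b c d
  · rw [min_comm, add_comm]
    exact this hd ha hc hb hbc.symm (hbc.lt_or_gt.resolve_left hlt)
  rw [two_nsmul]
  rcases lt_or_ge a d with had | hda
  · calc
      min (g a c) (g d b) + min (g a c) (g d b) ≤ g a c + g d b :=
        add_le_add (min_le_left _ _) (min_le_right _ _)
      _ < g a b + g d c := hg ha hd hb hc had hlt
  · calc
      min (g a c) (g d b) + min (g a c) (g d b) ≤ g d b + g d b :=
        add_le_add (min_le_right _ _) (min_le_right _ _)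
      _ < g a b + g d c :=
        add_lt_add_of_le_of_lt (hleft b hb hd ha hda) (hright d hd hb hc hlt)

section ParallelSum

variable {K : Type*} [Field K]

/-- The parallel sum (half the harmonic mean) of `x` and `y`. It is used for positive arguments
only; where `x + y = 0` the quotient is `0`. -/
def parallelSum (x y : K) : K :=
  x * y / (x + y)

theorem parallelSum_comm (x y : K) : parallelSum x y = parallelSum y x := by
  rw [parallelSum, parallelSum, mul_comm, add_comm]

theorem parallelSum_sub_parallelSum {x x' y : K} (hx : x + y ≠ 0) (hx' : x' + y ≠ 0) :
    parallelSum x' y - parallelSum x y = (x' - x) * (y / (x + y) * (y / (x' + y))) := by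
  unfold parallelSum
  field_simp
  ring

variable [LinearOrder K] [IsStrictOrderedRing K]

theorem strictMonoOn_parallelSum_left {y : K} (hy : 0 < y) :
    StrictMonoOn (fun x ↦ parallelSum x y) (Ioi 0) := by
  intro x (hx : 0 < x) x' (hx' : 0 < x') hlt
  rw [← sub_pos, parallelSum_sub_parallelSum (by positivity) (by positivity)]
  have := sub_pos.2 hlt
  positivity

theorem strictMonoOn_parallelSum_right {x : K} (hx : 0 < x) :
    StrictMonoOn (parallelSum x) (Ioi 0) := by
  simpa only [parallelSum_comm] using strictMonoOn_parallelSum_left hx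

theorem strictMonoOn_div_const_add {x : K} (hx : 0 < x) :
    StrictMonoOn (fun y ↦ y / (x + y)) (Ici 0) := by
  intro y (hy : 0 ≤ y) y' (hy' : 0 ≤ y') hlt
  rw [div_lt_div_iff₀ (by positivity) (by positivity)]
  linarith [mul_lt_mul_of_pos_right hlt hx]

theorem strictSupermodularOn_parallelSum :
    StrictSupermodularOn (parallelSum : K → K → K) (Ioi 0) (Ioi 0) := by
  intro x (hx : 0 < x) x' (hx' : 0 < x') y (hy : 0 < y) y' (hy' : 0 < y') hxx' hyy'
  have hfrac {z : K} (hz : 0 < z) : y / (z + y) < y' / (z + y') :=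
    strictMonoOn_div_const_add hz hy.le hy'.le hyy'
  have hdiff : parallelSum x' y - parallelSum x y < parallelSum x' y' - parallelSum x y' := by
    rw [parallelSum_sub_parallelSum (by positivity) (by positivity),
      parallelSum_sub_parallelSum (by positivity) (by positivity)]
    refine mul_lt_mul_of_pos_left ?_ (sub_pos.2 hxx')
    exact mul_lt_mul'' (hfrac hx) (hfrac hx') (by positivity) (by positivity)
  linarith

end ParallelSum

theorem stmt_11_general {K : Type*} [Field K] [LinearOrder K] [IsStrictOrderedRing K]
    {a b c d : K} (ha : 0 < a) (hb : 0 < b) (hc : 0 < c) (hd : 0 < d) (hbc : b ≠ c) :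
    2 * min (a * c / (a + c)) (b * d / (b + d)) < a * b / (a + b) + c * d / (c + d) := by
  change 2 * min (parallelSum a c) (parallelSum b d) < parallelSum a b + parallelSum c d
  rw [parallelSum_comm b d, parallelSum_comm c d, ← Nat.cast_ofNat, ← nsmul_eq_mul]
  exact strictSupermodularOn_parallelSum.two_nsmul_min_lt
    (fun _ hy ↦ (strictMonoOn_parallelSum_left hy).monotoneOn)
    (fun _ hx ↦ strictMonoOn_parallelSum_right hx) ha hd hb hc hbc

/-- Lemma 2: if `d` is the largest mass and `b < c`, side pooling is
strictly worse than the better of the two diagonal poolings. -/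
theorem stmt_11 (a b c d : ℝ) (ha : 0 < a) (hb : 0 < b) (hc : 0 < c) (hd : 0 < d)
    (hda : a ≤ d) (hdb : b ≤ d) (hdc : c ≤ d) (hbc : b < c) :
    2 * min (a * c / (a + c)) (b * d / (b + d)) < a * b / (a + b) + c * d / (c + d) :=
  stmt_11_general ha hb hc hd hbc.ne
end

section
/- Let φ > 0 and σ₁, σ₂, σ₁₂ ∈ ℝ with σ₁₂ ≠ 0. Let Σ be the 2×2 matrix with rows (σ₁², σ₁₂) and (σ₁₂, σ₂²), and Φ the 2×2 diagonal matrix diag(φ, 1). Define r⁺ = (φσ₁² − σ₂² + √((φσ₁² − σ₂²)² + 4φσ₁₂²)) / (2σ₁₂) and r⁻ = (φσ₁² − σ₂² − √((φσ₁² − σ₂²)² + 4φσ₁₂²)) / (2σ₁₂). Then r⁺ ≠ 0 and r⁻ ≠ 0, the vectors β⁺ = (r⁺, 1) and β⁻ = (r⁻, 1) are eigenvectors of ΦΣ with distinct eigenvalues, and every eigenvector of ΦΣ is a nonzero scalar multiple of β⁺ or of β⁻. -/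
open Matrix

/-!
If the lower-left entry of a `2 × 2` matrix `A` is nonzero, no eigenvector has second coordinate
zero, so every eigenvector is a multiple of some `(r, 1)`. The second row of `A (r, 1) = μ (r, 1)`
determines `μ` as an injective affine function of `r`; substituting it into the first row leaves a
quadratic equation for `r` whose discriminant is that of the characteristic polynomial of `A`.
-/

section Eigenvectors

variable {R : Type*} [CommRing R] {A : Matrix (Fin 2) (Fin 2) R} {v : Fin 2 → R} {r r' μ : R}

theorem apply_ne_zero_of_mulVec_eq_smul [NoZeroDivisors R] {i j : Fin 2} (hij : i ≠ j)
    (hA : A i j ≠ 0) (hv : v ≠ 0) (h : A *ᵥ v = μ • v) : v i ≠ 0 := by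
  intro hi
  have row_i : A i i * v i + A i j * v j = μ * v i := by
    simpa [mulVec, dotProduct, Fintype.sum_eq_add i j hij (by lia)] using congrFun h i
  have hj : v j = 0 := by simpa [hi, hA] using row_i
  refine hv (funext fun k => ?_)
  obtain rfl | rfl : k = i ∨ k = j := by lia
  exacts [hi, hj]

theorem mulVec_ratio_eq_smul_iff :
    A *ᵥ ![r, 1] = μ • ![r, 1] ↔
      μ = A 1 0 * r + A 1 1 ∧ A 1 0 * (r * r) + (A 1 1 - A 0 0) * r + -A 0 1 = 0 := by
  have rows : A *ᵥ ![r, 1] = μ • ![r, 1] ↔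
      A 0 0 * r + A 0 1 = μ * r ∧ A 1 0 * r + A 1 1 = μ := by
    simp [funext_iff, Fin.forall_fin_two]
  rw [rows]
  constructor
  · rintro ⟨row₀, rfl⟩
    exact ⟨rfl, by linear_combination -row₀⟩
  · rintro ⟨rfl, hr⟩
    exact ⟨by linear_combination -hr, rfl⟩

theorem ratio_eq_of_mulVec_eq_smul [NoZeroDivisors R] (hA : A 1 0 ≠ 0)
    (h : A *ᵥ ![r, 1] = μ • ![r, 1]) (h' : A *ᵥ ![r', 1] = μ • ![r', 1]) : r = r' := by
  have eigenvalue_eq : A 1 0 * r + A 1 1 = A 1 0 * r' + A 1 1 :=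
    (mulVec_ratio_eq_smul_iff.mp h).1.symm.trans (mulVec_ratio_eq_smul_iff.mp h').1
  exact mul_left_cancel₀ hA (add_right_cancel eigenvalue_eq)

end Eigenvectors

section Field

variable {K : Type*} [Field K] {A : Matrix (Fin 2) (Fin 2) K} {v : Fin 2 → K} {μ : K}

theorem exists_mulVec_ratio_eq_smul_iff [NeZero (2 : K)] (hA : A 1 0 ≠ 0) {s : K}
    (hs : A.discr = s * s) (r : K) :
    (∃ μ : K, A *ᵥ ![r, 1] = μ • ![r, 1]) ↔
      r = (A 0 0 - A 1 1 + s) / (2 * A 1 0) ∨ r = (A 0 0 - A 1 1 - s) / (2 * A 1 0) := by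
  have discrim_eq : discrim (A 1 0) (A 1 1 - A 0 0) (-A 0 1) = s * s := by
    rw [← hs, discr_fin_two, trace_fin_two, det_fin_two, discrim]
    ring
  simp only [mulVec_ratio_eq_smul_iff, exists_eq_left, quadratic_eq_zero_iff hA discrim_eq, neg_sub]

theorem exists_eq_smul_ratio_of_mulVec_eq_smul (hA : A 1 0 ≠ 0) (hv : v ≠ 0)
    (h : A *ᵥ v = μ • v) :
    ∃ c r : K, c ≠ 0 ∧ v = c • ![r, 1] ∧ A *ᵥ ![r, 1] = μ • ![r, 1] := by
  have hv₁ : v 1 ≠ 0 := apply_ne_zero_of_mulVec_eq_smul one_ne_zero hA hv h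
  have v_eq : v = v 1 • ![v 0 / v 1, 1] := by
    simp [funext_iff, Fin.forall_fin_two, mul_div_cancel₀ _ hv₁]
  refine ⟨v 1, v 0 / v 1, hv₁, v_eq, (smul_right_inj hv₁).mp ?_⟩
  rw [← mulVec_smul, smul_comm, ← v_eq, h]

theorem stmt_14_general [NeZero (2 : K)] (h10 : A 1 0 ≠ 0) (h01 : A 0 1 ≠ 0) {s rp rm : K}
    (hs : s ≠ 0) (hdiscr : A.discr = s * s)
    (hrp : rp = (A 0 0 - A 1 1 + s) / (2 * A 1 0))
    (hrm : rm = (A 0 0 - A 1 1 - s) / (2 * A 1 0)) :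
    rp ≠ 0 ∧ rm ≠ 0 ∧
    (∃ lp lm : K, lp ≠ lm ∧
      A *ᵥ ![rp, 1] = lp • ![rp, 1] ∧ A *ᵥ ![rm, 1] = lm • ![rm, 1]) ∧
    (∀ β : Fin 2 → K, β ≠ 0 → (∃ lam : K, A *ᵥ β = lam • β) →
      ∃ c : K, c ≠ 0 ∧ (β = c • ![rp, 1] ∨ β = c • ![rm, 1])) := by
  have eigen_iff (r : K) : (∃ μ : K, A *ᵥ ![r, 1] = μ • ![r, 1]) ↔ r = rp ∨ r = rm := by
    rw [hrp, hrm, exists_mulVec_ratio_eq_smul_iff h10 hdiscr]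
  have ratio_ne : rp ≠ rm := by
    rw [hrp, hrm, Ne, div_left_inj' (mul_ne_zero two_ne_zero h10)]
    intro h
    exact mul_ne_zero two_ne_zero hs (by linear_combination h)
  obtain ⟨lp, hlp⟩ := (eigen_iff rp).mpr (.inl rfl)
  obtain ⟨lm, hlm⟩ := (eigen_iff rm).mpr (.inr rfl)
  refine ⟨apply_ne_zero_of_mulVec_eq_smul zero_ne_one h01 (by simp) hlp,
    apply_ne_zero_of_mulVec_eq_smul zero_ne_one h01 (by simp) hlm,
    ⟨lp, lm, ?_, hlp, hlm⟩, ?_⟩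
  · rintro rfl
    exact ratio_ne (ratio_eq_of_mulVec_eq_smul h10 hlp hlm)
  · rintro β hβ ⟨μ, hμ⟩
    obtain ⟨c, r, hc, rfl, hr⟩ := exists_eq_smul_ratio_of_mulVec_eq_smul h10 hβ hμ
    obtain rfl | rfl := (eigen_iff r).mp ⟨μ, hr⟩
    exacts [⟨c, hc, .inl rfl⟩, ⟨c, hc, .inr rfl⟩]

end Field

/-- Corollary, correlated case: with `σ₁₂ ≠ 0`, the ratios `r⁺, r⁻` are
nonzero, `(r⁺,1)` and `(r⁻,1)` are eigenvectors of `ΦΣ` with distinct eigenvalues, and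
every eigenvector of `ΦΣ` is a nonzero scalar multiple of one of them. -/
theorem stmt_14 (φ σ₁ σ₂ σ₁₂ : ℝ) (hφ : 0 < φ) (h12 : σ₁₂ ≠ 0)
    (S Φm : Matrix (Fin 2) (Fin 2) ℝ)
    (hS : S = !![σ₁ ^ 2, σ₁₂; σ₁₂, σ₂ ^ 2])
    (hΦ : Φm = !![φ, 0; 0, 1])
    (rp rm : ℝ)
    (hrp : rp = (φ * σ₁ ^ 2 - σ₂ ^ 2 +
        Real.sqrt ((φ * σ₁ ^ 2 - σ₂ ^ 2) ^ 2 + 4 * φ * σ₁₂ ^ 2)) / (2 * σ₁₂))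
    (hrm : rm = (φ * σ₁ ^ 2 - σ₂ ^ 2 -
        Real.sqrt ((φ * σ₁ ^ 2 - σ₂ ^ 2) ^ 2 + 4 * φ * σ₁₂ ^ 2)) / (2 * σ₁₂)) :
    rp ≠ 0 ∧ rm ≠ 0 ∧
    (∃ lp lm : ℝ, lp ≠ lm ∧
      (Φm * S).mulVec ![rp, 1] = lp • ![rp, 1] ∧
      (Φm * S).mulVec ![rm, 1] = lm • ![rm, 1]) ∧
    (∀ β : Fin 2 → ℝ, β ≠ 0 → (∃ lam : ℝ, (Φm * S).mulVec β = lam • β) →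
      ∃ c : ℝ, c ≠ 0 ∧ (β = c • ![rp, 1] ∨ β = c • ![rm, 1])) := by
  have mul_eq : Φm * S = !![φ * σ₁ ^ 2, φ * σ₁₂; σ₁₂, σ₂ ^ 2] := by simp [hΦ, hS]
  have discr_pos : 0 < (φ * σ₁ ^ 2 - σ₂ ^ 2) ^ 2 + 4 * φ * σ₁₂ ^ 2 := by positivity
  have discr_eq : (Φm * S).discr = (φ * σ₁ ^ 2 - σ₂ ^ 2) ^ 2 + 4 * φ * σ₁₂ ^ 2 := by
    rw [mul_eq, discr_fin_two, trace_fin_two_of, det_fin_two_of]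
    ring
  refine stmt_14_general (A := Φm * S) ?_ ?_ (Real.sqrt_pos.mpr discr_pos).ne'
    (discr_eq.trans (Real.mul_self_sqrt discr_pos.le).symm) ?_ ?_
  · simpa [mul_eq] using h12
  · simpa [mul_eq] using ⟨hφ.ne', h12⟩
  · simpa [mul_eq] using hrp
  · simpa [mul_eq] using hrm
end

section
/- Let (Ω, F, P) be a probability space, n ≥ 1, and θ : Ω → ℝⁿ a random vector with E‖θ‖² < ∞, E[θ] = 0, and covariance matrix Σ = E[θθᵀ]. Let Φ be a diagonal real n×n matrix with positive diagonal entries and let β ∈ ℝⁿ with βᵀΣβ ≠ 0. Define s = βᵀθ and the action a = (Σβ/(βᵀΣβ))·s. Then E[ −(a−θ)ᵀΦ(a−θ) ] = −tr(ΦΣ) + (βᵀΣΦΣβ)/(βᵀΣβ). -/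
open Matrix MeasureTheory

/-!
The error `θ - a` is `R θ` for the matrix `R = 1 - (βᵀΣβ)⁻¹ Σββᵀ`, so the expected loss is
`tr (Φ R Σ Rᵀ)`. Since `R` annihilates `Σβ`, the residual covariance `R Σ Rᵀ` collapses to the
rank-one correction `Σ - (βᵀΣβ)⁻¹ Σβ(Σβ)ᵀ`, whose two terms give the two terms of the payoff.
-/

section RegressionResidual

variable {ι K : Type*} [Fintype ι] [DecidableEq ι] [Field K]

/-- The residual operator `1 - (βᵀSβ)⁻¹ Sββᵀ` of the linear regression of a vector with
second-moment matrix `S` on its score along `β`. It is meaningful only when `βᵀSβ ≠ 0`; otherwise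
division by zero makes it the identity. -/
def regressionResidual (S : Matrix ι ι K) (β : ι → K) : Matrix ι ι K :=
  1 - (β ⬝ᵥ S *ᵥ β)⁻¹ • vecMulVec (S *ᵥ β) β

theorem regressionResidual_mulVec (S : Matrix ι ι K) (β x : ι → K) :
    regressionResidual S β *ᵥ x = x - ((β ⬝ᵥ S *ᵥ β)⁻¹ * (β ⬝ᵥ x)) • S *ᵥ β := by
  rw [regressionResidual, sub_mulVec, one_mulVec, smul_mulVec, vecMulVec_mulVec, op_smul_eq_smul,
    smul_smul]

theorem regressionResidual_mulVec_mulVec_self {S : Matrix ι ι K} {β : ι → K}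
    (hβ : β ⬝ᵥ S *ᵥ β ≠ 0) : regressionResidual S β *ᵥ S *ᵥ β = 0 := by
  rw [regressionResidual_mulVec, inv_mul_cancel₀ hβ, one_smul, sub_self]

theorem regressionResidual_mul {S : Matrix ι ι K} (hS : S.IsSymm) (β : ι → K) :
    regressionResidual S β * S = S - (β ⬝ᵥ S *ᵥ β)⁻¹ • vecMulVec (S *ᵥ β) (S *ᵥ β) := by
  rw [regressionResidual, sub_mul, one_mul, smul_mul_assoc, vecMulVec_mul, ← mulVec_transpose,
    hS.eq]

theorem mul_transpose_regressionResidual (S : Matrix ι ι K) (β : ι → K) :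
    S * (regressionResidual S β)ᵀ =
      S - (β ⬝ᵥ S *ᵥ β)⁻¹ • vecMulVec (S *ᵥ β) (S *ᵥ β) := by
  rw [regressionResidual, transpose_sub, transpose_one, transpose_smul, transpose_vecMulVec,
    mul_sub, mul_one, mul_smul_comm, mul_vecMulVec]

theorem regressionResidual_mul_mul_transpose {S : Matrix ι ι K} (hS : S.IsSymm) {β : ι → K}
    (hβ : β ⬝ᵥ S *ᵥ β ≠ 0) :
    regressionResidual S β * S * (regressionResidual S β)ᵀ =
      S - (β ⬝ᵥ S *ᵥ β)⁻¹ • vecMulVec (S *ᵥ β) (S *ᵥ β) := by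
  rw [Matrix.mul_assoc, mul_transpose_regressionResidual, mul_sub, mul_smul_comm, mul_vecMulVec,
    regressionResidual_mulVec_mulVec_self hβ, zero_vecMulVec, smul_zero, sub_zero,
    regressionResidual_mul hS]

end RegressionResidual

section SecondMoment

variable {Ω ι κ : Type*} [MeasurableSpace Ω] {μ : Measure Ω} {θ : Ω → ι → ℝ}

/-- The matrix `E[θθᵀ]` of second moments, which is the covariance matrix when `θ` is centered.
Entries whose integrand is not integrable are `0`. -/
noncomputable def secondMoment (θ : Ω → ι → ℝ) (μ : Measure Ω) : Matrix ι ι ℝ :=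
  of fun i j => ∫ ω, θ ω i * θ ω j ∂μ

theorem secondMoment_isSymm (θ : Ω → ι → ℝ) (μ : Measure Ω) : (secondMoment θ μ).IsSymm :=
  IsSymm.ext fun i j => by simp only [secondMoment, of_apply, mul_comm]

variable [Fintype ι]

theorem memLp_two_of_integrable_sum_sq (hθ : AEStronglyMeasurable θ μ)
    (hsq : Integrable (fun ω => ∑ i, θ ω i ^ 2) μ) : MemLp θ 2 μ := by
  refine MemLp.of_eval fun i => ?_
  have hi : AEStronglyMeasurable (θ · i) μ :=
    (continuous_apply i).comp_aestronglyMeasurable hθ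
  refine (memLp_two_iff_integrable_sq hi).2 (hsq.mono' (hi.pow 2) (.of_forall fun ω => ?_))
  rw [Real.norm_of_nonneg (sq_nonneg _)]
  exact Finset.single_le_sum (fun k _ => sq_nonneg (θ ω k)) (Finset.mem_univ i)

theorem integral_dotProduct_mulVec (hθ : MemLp θ 2 μ) (Φ : Matrix ι ι ℝ) :
    ∫ ω, θ ω ⬝ᵥ Φ *ᵥ θ ω ∂μ = (Φ * secondMoment θ μ).trace := by
  have hint (i j : ι) : Integrable (fun ω => Φ i j * (θ ω j * θ ω i)) μ :=
    ((hθ.eval j).integrable_mul (hθ.eval i)).const_mul _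
  calc ∫ ω, θ ω ⬝ᵥ Φ *ᵥ θ ω ∂μ
      = ∫ ω, ∑ i, ∑ j, Φ i j * (θ ω j * θ ω i) ∂μ := by
        simp only [dotProduct, mulVec, Finset.mul_sum, mul_left_comm, mul_comm]
    _ = ∑ i, ∑ j, ∫ ω, Φ i j * (θ ω j * θ ω i) ∂μ := by
        rw [integral_finsetSum _ fun i _ => integrable_finsetSum _ fun j _ => hint i j]
        exact Finset.sum_congr rfl fun i _ => integral_finsetSum _ fun j _ => hint i j
    _ = (Φ * secondMoment θ μ).trace := by
        simp only [integral_const_mul, trace, diag_apply, mul_apply, secondMoment, of_apply]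

theorem integral_mulVec_dotProduct_mulVec_mulVec [Fintype κ] (hθ : MemLp θ 2 μ)
    (A : Matrix κ ι ℝ) (Φ : Matrix κ κ ℝ) :
    ∫ ω, (A *ᵥ θ ω) ⬝ᵥ Φ *ᵥ A *ᵥ θ ω ∂μ = (Φ * (A * secondMoment θ μ * Aᵀ)).trace := by
  calc ∫ ω, (A *ᵥ θ ω) ⬝ᵥ Φ *ᵥ A *ᵥ θ ω ∂μ
      = ∫ ω, θ ω ⬝ᵥ (Aᵀ * (Φ * A)) *ᵥ θ ω ∂μ := by
        simp only [← mulVec_mulVec, dotProduct_mulVec _ Aᵀ, vecMul_transpose]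
    _ = (Aᵀ * (Φ * A) * secondMoment θ μ).trace := integral_dotProduct_mulVec hθ _
    _ = (Φ * (A * secondMoment θ μ * Aᵀ)).trace := by
        rw [Matrix.mul_assoc, trace_mul_comm]
        simp only [Matrix.mul_assoc]

end SecondMoment

theorem stmt_17_general {Ω ι : Type*} [MeasurableSpace Ω] {μ : Measure Ω} [Fintype ι]
    {θ : Ω → ι → ℝ} (hθ : MemLp θ 2 μ)
    {S : Matrix ι ι ℝ} (hS : ∀ i j, S i j = ∫ ω, θ ω i * θ ω j ∂μ)
    (Φ : Matrix ι ι ℝ) {β : ι → ℝ} (hβ : β ⬝ᵥ S *ᵥ β ≠ 0)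
    {s : Ω → ℝ} (hs : ∀ ω, s ω = β ⬝ᵥ θ ω)
    {a : Ω → ι → ℝ} (ha : ∀ ω, a ω = ((β ⬝ᵥ S *ᵥ β)⁻¹ * s ω) • S *ᵥ β) :
    ∫ ω, -((a ω - θ ω) ⬝ᵥ Φ *ᵥ (a ω - θ ω)) ∂μ =
      -(Φ * S).trace + (β ⬝ᵥ (S * Φ * S) *ᵥ β) / (β ⬝ᵥ S *ᵥ β) := by
  classical
  have hmoment : S = secondMoment θ μ := Matrix.ext hS
  have hsymm : S.IsSymm := hmoment ▸ secondMoment_isSymm θ μ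
  have herror (ω : Ω) : a ω - θ ω = -(regressionResidual S β *ᵥ θ ω) := by
    rw [regressionResidual_mulVec, ha, hs, neg_sub]
  have hquad : β ⬝ᵥ (S * Φ * S) *ᵥ β = (Φ *ᵥ S *ᵥ β) ⬝ᵥ S *ᵥ β := by
    rw [← mulVec_mulVec, ← mulVec_mulVec, dotProduct_mulVec,
      ← mulVec_transpose, hsymm.eq, dotProduct_comm]
  calc ∫ ω, -((a ω - θ ω) ⬝ᵥ Φ *ᵥ (a ω - θ ω)) ∂μ
      = -(Φ * (regressionResidual S β * S * (regressionResidual S β)ᵀ)).trace := by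
        simp only [herror, mulVec_neg, neg_dotProduct_neg, integral_neg]
        rw [integral_mulVec_dotProduct_mulVec_mulVec hθ, ← hmoment]
    _ = -(Φ * (S - (β ⬝ᵥ S *ᵥ β)⁻¹ • vecMulVec (S *ᵥ β) (S *ᵥ β))).trace := by
        rw [regressionResidual_mul_mul_transpose hsymm hβ]
    _ = -(Φ * S).trace + (β ⬝ᵥ (S * Φ * S) *ᵥ β) / (β ⬝ᵥ S *ᵥ β) := by
        rw [mul_sub, mul_smul_comm, mul_vecMulVec, trace_sub, trace_smul, trace_vecMulVec, hquad,
          smul_eq_mul]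
        ring

/-- ex-ante payoff of a linear score with the regression best reply:
if `θ` is a centered random vector with covariance `Σ`, `s = βᵀθ` and
`a = (Σβ/(βᵀΣβ))·s`, then `E[−(a−θ)ᵀΦ(a−θ)] = −tr(ΦΣ) + βᵀΣΦΣβ/(βᵀΣβ)`. -/
theorem stmt_17 {Ω : Type*} [MeasurableSpace Ω] (P : Measure Ω) [IsProbabilityMeasure P]
    (n : ℕ) (hn : 1 ≤ n)
    (θ : Ω → (Fin n → ℝ)) (hmeas : Measurable θ)
    (hmom : Integrable (fun ω => ∑ i, (θ ω i) ^ 2) P)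
    (hmean : ∀ i, ∫ ω, θ ω i ∂P = 0)
    (S : Matrix (Fin n) (Fin n) ℝ)
    (hS : ∀ i j, S i j = ∫ ω, θ ω i * θ ω j ∂P)
    (Φm : Matrix (Fin n) (Fin n) ℝ)
    (d : Fin n → ℝ) (hΦ : Φm = Matrix.diagonal d) (hd : ∀ i, 0 < d i)
    (β : Fin n → ℝ) (hβ : β ⬝ᵥ S.mulVec β ≠ 0)
    (s : Ω → ℝ) (hs : ∀ ω, s ω = β ⬝ᵥ θ ω)
    (a : Ω → (Fin n → ℝ))
    (ha : ∀ ω, a ω = ((β ⬝ᵥ S.mulVec β)⁻¹ * s ω) • S.mulVec β) :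
    ∫ ω, -((a ω - θ ω) ⬝ᵥ Φm.mulVec (a ω - θ ω)) ∂P =
      -(Φm * S).trace + (β ⬝ᵥ (S * Φm * S).mulVec β) / (β ⬝ᵥ S.mulVec β) :=
  stmt_17_general (memLp_two_of_integrable_sum_sq hmeas.aestronglyMeasurable hmom) hS Φm hβ hs ha
end
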